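/- Let X be an ordered family of equivalences (OFE), let f : X → X be contractive, and define d : X → X → ℝ by d x y = sInf { (2 : ℝ) ^ (-(n : ℤ)) | n : ℕ, x ≈[n] y }. Then d (f x) (f y) ≤ (1/2) * d x y for all x, y : X. -/

import Mathlib

/-- An ordered family of equivalences (OFE) on a type `X`. -/
structure OFE (X : Type*) where
  rel : ℕ → X → X → Prop
  equiv : ∀ n, Equivalence (rel n)
  total_zero : ∀ x y, rel 0 x y
  mono : ∀ n x y, rel (n + 1) x y → rel n x y
  ext : ∀ x y, (∀ n, rel n x y) → x = y

/-- A sequence is Cauchy for an OFE. -/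
def OFE.IsCauchy {X : Type*} (O : OFE X) (u : ℕ → X) : Prop :=
  ∀ n, ∃ m, ∀ i j, m ≤ i → m ≤ j → O.rel n (u i) (u j)

/-- `l` is a limit of the sequence `u`. -/
def OFE.IsLimit {X : Type*} (O : OFE X) (u : ℕ → X) (l : X) : Prop :=
  ∀ n, ∃ m, ∀ i, m ≤ i → O.rel n (u i) l

/-- A complete OFE (COFE): every Cauchy sequence has a limit. -/
def OFE.IsComplete {X : Type*} (O : OFE X) : Prop :=
  ∀ u : ℕ → X, O.IsCauchy u → ∃ l, O.IsLimit u l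

/-- A function is contractive. -/
def OFE.Contractive {X : Type*} (O : OFE X) (f : X → X) : Prop :=
  ∀ n x y, O.rel n x y → O.rel (n + 1) (f x) (f y)

/-- The metric induced by an OFE. -/
noncomputable def OFE.dist {X : Type*} (O : OFE X) (x y : X) : ℝ :=
  sInf {r : ℝ | ∃ n : ℕ, O.rel n x y ∧ r = (2 : ℝ) ^ (-(n : ℤ))}

namespace OFE

variable {X : Type*} (O : OFE X) {x y : X}

theorem dist_le_of_rel {n : ℕ} (h : O.rel n x y) : O.dist x y ≤ (2 : ℝ) ^ (-(n : ℤ)) := by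
  refine csInf_le ⟨0, ?_⟩ ⟨n, h, rfl⟩
  rintro _ ⟨m, -, rfl⟩
  positivity

theorem le_dist {r : ℝ} (h : ∀ n : ℕ, O.rel n x y → r ≤ (2 : ℝ) ^ (-(n : ℤ))) :
    r ≤ O.dist x y := by
  refine le_csInf ⟨_, 0, O.total_zero x y, rfl⟩ ?_
  rintro _ ⟨n, hn, rfl⟩
  exact h n hn

end OFE

theorem contractive_dist_le_half_general {X Y : Type*} (O : OFE X) (P : OFE Y) (f : X → Y)
    (k : ℕ) (hf : ∀ n x y, O.rel n x y → P.rel (n + k) (f x) (f y)) :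
    ∀ x y, P.dist (f x) (f y) ≤ (1 / 2) ^ k * O.dist x y := by
  intro x y
  rw [one_div, inv_pow, le_inv_mul_iff₀ (by positivity)]
  refine O.le_dist fun n hn => ?_
  calc
    2 ^ k * P.dist (f x) (f y) ≤ 2 ^ k * (2 : ℝ) ^ (-((n + k : ℕ) : ℤ)) := by
      gcongr
      exact P.dist_le_of_rel (hf n x y hn)
    _ = (2 : ℝ) ^ (-(n : ℤ)) := by
      rw [← zpow_natCast, ← zpow_add₀ two_ne_zero]
      congr 1
      lia

theorem contractive_dist_le_half {X : Type*} (O : OFE X)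
    (f : X → X) (hf : O.Contractive f) :
    ∀ x y, O.dist (f x) (f y) ≤ (1 / 2) * O.dist x y := by
  simpa using contractive_dist_le_half_general O O f 1 hf
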